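/- Let K ⊆ ℝⁿ be a convex polytope with integral vertices, let F ∈ ℤ_q[x^±] satisfy Δ(F) ⊆ K, and let s ≥ 1. Let B be the finite set (sK) ∩ ℤⁿ and define the square matrix M_s, with rows and columns indexed by B, by (M_s)_{v,u} = [F^{(p−1)s}]_{pv−u} for u, v ∈ B. Then for every u ∈ B: (i) the coefficient [A_{F^s}^a(x^u)]_v is zero for every v ∈ ℤⁿ ∖ B, and (ii) for every v ∈ B, the coefficient [A_{F^s}^a(x^u)]_v equals the (v,u) entry of the matrix product φ^{a−1}(M_s)·φ^{a−2}(M_s)⋯φ(M_s)·M_s, where φ acts entrywise on matrices. That is, the matrix of the ℤ_q-linear operator A_{F^s}^a on P_{sK} with respect to the monomial basis {x^u : u ∈ B} is φ^{a−1}(M_s)⋯φ(M_s)·M_s. -/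

import Mathlib

open WittVector

noncomputable section

variable (p : ℕ) [Fact p.Prime] (a n : ℕ)

/-- The finite field `𝔽_q` with `q = p^a` elements. -/
abbrev Fq := GaloisField p a

/-- The ring `ℤ_q` of `p`-typical Witt vectors of `𝔽_q`. -/
abbrev Zq := WittVector p (Fq p a)

/-- The Witt-vector Frobenius automorphism `φ` of `ℤ_q`. -/
def φW : Zq p a ≃+* Zq p a := WittVector.frobeniusEquiv p (Fq p a)

/-- The ring `ℤ_q[x^±]` of Laurent polynomials in `n` variables over `ℤ_q`. -/
abbrev LP := AddMonoidAlgebra (Zq p a) (Fin n → ℤ)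

/-- The map `φ` on Laurent polynomials: `φ(G) = Σ_u φ([G]_u) x^{pu}`. -/
def φL (G : LP p a n) : LP p a n :=
  Finsupp.sum G.coeff fun u c => AddMonoidAlgebra.single ((p : ℤ) • u) (φW p a c)

/-- The map `ψ` on Laurent polynomials: `ψ(G) = Σ_u φ⁻¹([G]_{pu}) x^u`. -/
def ψL (G : LP p a n) : LP p a n :=
  AddMonoidAlgebra.ofCoeff <| Finsupp.mapRange (φW p a).symm (map_zero _)
    (Finsupp.comapDomain (fun u : Fin n → ℤ => (p : ℤ) • u) G.coeff
      ((smul_right_injective (Fin n → ℤ)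
        (by exact_mod_cast (Fact.out : p.Prime).ne_zero)).injOn))

/-- The operator `A_H = ψ ∘ T_{H^{p-1}}`, where `T_H` is multiplication by `H`. -/
def A (H : LP p a n) (G : LP p a n) : LP p a n := ψL p a n (H ^ (p - 1) * G)


open scoped Pointwise

/-- The coordinatewise embedding of `ℤⁿ` into `ℝⁿ`. -/
def emb (n : ℕ) : (Fin n → ℤ) → (Fin n → ℝ) := fun u i => (u i : ℝ)

/-- The Newton polytope of a Laurent polynomial: the convex hull in `ℝⁿ` of its
set of exponents with nonzero coefficient. -/
def newton {R : Type*} [CommSemiring R] {n : ℕ} (F : AddMonoidAlgebra R (Fin n → ℤ)) :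
    Set (Fin n → ℝ) :=
  convexHull ℝ (emb n '' {u | F.coeff u ≠ 0})


/-- The matrix `M_s` with rows and columns indexed by `B = (sK) ∩ ℤⁿ`, given by
`(M_s)_{v,u} = [F^{(p−1)s}]_{pv−u}`. -/
def Ms (F : LP p a n) (s : ℕ) (B : Finset (Fin n → ℤ)) : Matrix B B (Zq p a) :=
  fun v u => (F ^ ((p - 1) * s)).coeff ((p : ℤ) • (v : Fin n → ℤ) - (u : Fin n → ℤ))

/-- The matrix product `φ^{a−1}(M) ⋯ φ(M) · M`, where `φ` acts entrywise. -/
def Φmat (B : Finset (Fin n → ℤ)) (M : Matrix B B (Zq p a)) : Matrix B B (Zq p a) :=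
  (((List.range a).reverse).map fun i => M.map fun x => (⇑(φW p a))^[i] x).prod

/-!
If the Newton polytopes of `H` and `G` lie in a convex set `K`, that of `H^{p-1} G` lies in `pK`,
and `ψ` divides exponents by `p`; so `A_H` preserves the Laurent polynomials with Newton polytope
in `K`. On their coefficient vectors, indexed by `K ∩ ℤⁿ`, it acts by a matrix `M` followed by
`φ⁻¹` on each coordinate. Moving every `φ⁻¹` to the left past the later matrices gives
`φ^k (A_H^k G) = φ^{k-1}(M) ⋯ φ(M) · M · G`, and `φ^a` is the identity of `ℤ_q`.
-/

section TwistedPow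

open scoped Matrix

variable {R ι : Type*} [Semiring R] [Fintype ι]

theorem iterate_comp_mulVec (σ : R →+* R) (M : Matrix ι ι R) (x : ι → R) (k : ℕ) :
    σ^[k] ∘ (M *ᵥ x) = M.map σ^[k] *ᵥ (σ^[k] ∘ x) := by
  ext i
  simpa only [RingHom.coe_pow, Function.comp_apply] using RingHom.map_mulVec (σ ^ k) M x i

variable [DecidableEq ι]

/-- The `σ`-twisted power `σ^{k-1}(M) ⋯ σ(M) · M` of a square matrix, with `σ` acting entrywise:
the matrix of `σ^k ∘ T^k` when `M` is the matrix of `σ ∘ T`. -/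
def twistedPow (σ : R → R) (M : Matrix ι ι R) (k : ℕ) : Matrix ι ι R :=
  ((List.range k).reverse.map fun i => M.map fun x => σ^[i] x).prod

theorem twistedPow_zero (σ : R → R) (M : Matrix ι ι R) : twistedPow σ M 0 = 1 := rfl

theorem twistedPow_succ (σ : R → R) (M : Matrix ι ι R) (k : ℕ) :
    twistedPow σ M (k + 1) = M.map σ^[k] * twistedPow σ M k := by
  simp only [twistedPow, List.range_succ, List.reverse_append, List.reverse_singleton,
    List.singleton_append, List.map_cons, List.prod_cons]

theorem iterate_comp_eq_twistedPow_mulVec (σ : R →+* R) (M : Matrix ι ι R) (x : ℕ → ι → R)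
    (hx : ∀ k, σ ∘ x (k + 1) = M *ᵥ x k) (k : ℕ) :
    σ^[k] ∘ x k = twistedPow σ M k *ᵥ x 0 := by
  induction k with
  | zero => rw [twistedPow_zero, Matrix.one_mulVec, Function.iterate_zero, Function.id_comp]
  | succ k ih =>
    calc σ^[k + 1] ∘ x (k + 1) = σ^[k] ∘ (σ ∘ x (k + 1)) := rfl
      _ = σ^[k] ∘ (M *ᵥ x k) := by rw [hx]
      _ = M.map σ^[k] *ᵥ (twistedPow σ M k *ᵥ x 0) := by rw [iterate_comp_mulVec, ih]
      _ = twistedPow σ M (k + 1) *ᵥ x 0 := by rw [Matrix.mulVec_mulVec, twistedPow_succ]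

end TwistedPow

section Newton

variable {R : Type*} [CommSemiring R] {n : ℕ} {F G : AddMonoidAlgebra R (Fin n → ℤ)}
  {K : Set (Fin n → ℝ)}

theorem emb_add (u v : Fin n → ℤ) : emb n (u + v) = emb n u + emb n v :=
  funext fun _ => Int.cast_add _ _

theorem emb_natCast_zsmul (d : ℕ) (u : Fin n → ℤ) : emb n ((d : ℤ) • u) = (d : ℝ) • emb n u := by
  ext i
  simp only [emb, Pi.smul_apply, smul_eq_mul, Int.cast_mul, Int.cast_natCast]

theorem emb_mem_newton {u : Fin n → ℤ} (hu : F.coeff u ≠ 0) : emb n u ∈ newton F :=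
  subset_convexHull ℝ _ ⟨u, hu, rfl⟩

theorem newton_subset_iff (hK : Convex ℝ K) :
    newton F ⊆ K ↔ ∀ u, F.coeff u ≠ 0 → emb n u ∈ K :=
  hK.convexHull_subset_iff.trans Set.image_subset_iff

theorem newton_single_subset (u : Fin n → ℤ) (c : R) :
    newton (AddMonoidAlgebra.single u c) ⊆ {emb n u} := by
  rw [newton_subset_iff (convex_singleton _)]
  intro v hv
  rw [AddMonoidAlgebra.coeff_single, Finsupp.single_apply_ne_zero] at hv
  rw [hv.1, Set.mem_singleton_iff]

theorem newton_mul_subset (F G : AddMonoidAlgebra R (Fin n → ℤ)) :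
    newton (F * G) ⊆ newton F + newton G := by
  refine (newton_subset_iff ((convex_convexHull ℝ _).add (convex_convexHull ℝ _))).2 fun u hu => ?_
  obtain ⟨v, hv, w, hw, rfl⟩ := Finset.mem_add.1
    (AddMonoidAlgebra.support_coeff_mul_subset F G (Finsupp.mem_support_iff.2 hu))
  rw [emb_add]
  exact Set.add_mem_add (emb_mem_newton (Finsupp.mem_support_iff.1 hv))
    (emb_mem_newton (Finsupp.mem_support_iff.1 hw))

theorem newton_pow_mul_subset (hK : Convex ℝ K) (hF : newton F ⊆ K) (hG : newton G ⊆ K) (m : ℕ) :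
    newton (F ^ m * G) ⊆ ((m + 1 : ℕ) : ℝ) • K := by
  induction m with
  | zero => simpa only [pow_zero, one_mul, zero_add, Nat.cast_one, one_smul] using hG
  | succ m ih =>
    calc newton (F ^ (m + 1) * G) = newton (F ^ m * G * F) := by rw [pow_succ, mul_right_comm]
      _ ⊆ ((m + 1 : ℕ) : ℝ) • K + K := (newton_mul_subset _ _).trans (Set.add_subset_add ih hF)
      _ = ((m + 1 + 1 : ℕ) : ℝ) • K := by
        rw [Nat.cast_succ (m + 1), hK.add_smul (Nat.cast_nonneg _) zero_le_one, one_smul]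

theorem newton_pow_subset (hK : Convex ℝ K) (hF : newton F ⊆ K) {m : ℕ} (hm : 1 ≤ m) :
    newton (F ^ m) ⊆ (m : ℝ) • K := by
  obtain ⟨m, rfl⟩ := Nat.exists_eq_add_of_le' hm
  rw [pow_succ]
  exact newton_pow_mul_subset hK hF hF m

end Newton

section Cartier

open scoped Matrix

variable {R : Type*} [CommSemiring R] (σ : R ≃+* R) (d : ℕ) {n : ℕ}

/-- The matrix of `σ ∘ A_H` on the span of the monomials with exponents in `B`, where `A_H` is
`cartierMul σ d H` below; it is `M_s` when `d = p` and `H = F^s`. -/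
def cartierMatrix (H : AddMonoidAlgebra R (Fin n → ℤ)) (B : Finset (Fin n → ℤ)) : Matrix B B R :=
  fun v u => (H ^ (d - 1)).coeff ((d : ℤ) • (v : Fin n → ℤ) - u)

variable [NeZero d]

/-- The Cartier-type operator `G ↦ Σ_u σ⁻¹([G]_{du}) x^u` on Laurent polynomials with coefficients
in a semiring with an automorphism `σ`; it is `ψ` when `σ` is the Frobenius `φ` and `d = p`. -/
def cartier (G : AddMonoidAlgebra R (Fin n → ℤ)) : AddMonoidAlgebra R (Fin n → ℤ) :=
  AddMonoidAlgebra.ofCoeff <| Finsupp.mapRange σ.symm (map_zero _) <|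
    Finsupp.comapDomain ((d : ℤ) • ·) G.coeff
      (smul_right_injective _ (NeZero.ne (d : ℤ))).injOn

/-- The operator `A_H = ψ ∘ T_{H^{d-1}}` for the operator `ψ = cartier σ d`, generalizing `A` from
`ℤ_q` to any coefficients with an automorphism. -/
def cartierMul (H G : AddMonoidAlgebra R (Fin n → ℤ)) : AddMonoidAlgebra R (Fin n → ℤ) :=
  cartier σ d (H ^ (d - 1) * G)

theorem coeff_cartier (G : AddMonoidAlgebra R (Fin n → ℤ)) (v : Fin n → ℤ) :
    (cartier σ d G).coeff v = σ.symm (G.coeff ((d : ℤ) • v)) := rfl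

variable {H G : AddMonoidAlgebra R (Fin n → ℤ)} {K : Set (Fin n → ℝ)}

theorem newton_cartier_subset (hK : Convex ℝ K) (hG : newton G ⊆ (d : ℝ) • K) :
    newton (cartier σ d G) ⊆ K := by
  rw [newton_subset_iff hK]
  intro v hv
  rw [coeff_cartier, map_ne_zero_iff _ σ.symm.injective] at hv
  have hdv : (d : ℝ) • emb n v ∈ (d : ℝ) • K := emb_natCast_zsmul d v ▸ hG (emb_mem_newton hv)
  exact (Set.smul_mem_smul_set_iff₀ (NeZero.ne (d : ℝ)) _ _).1 hdv

theorem newton_cartierMul_subset (hK : Convex ℝ K) (hH : newton H ⊆ K) (hG : newton G ⊆ K) :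
    newton (cartierMul σ d H G) ⊆ K := by
  have hHG := newton_pow_mul_subset hK hH hG (d - 1)
  rw [Nat.sub_add_cancel NeZero.one_le] at hHG
  exact newton_cartier_subset σ d hK hHG

theorem newton_iterate_cartierMul_subset (hK : Convex ℝ K) (hH : newton H ⊆ K)
    (hG : newton G ⊆ K) (k : ℕ) : newton ((cartierMul σ d H)^[k] G) ⊆ K := by
  have hmaps : Set.MapsTo (cartierMul σ d H) {G | newton G ⊆ K} {G | newton G ⊆ K} :=
    fun _ => newton_cartierMul_subset σ d hK hH
  exact hmaps.iterate k hG

variable {B : Finset (Fin n → ℤ)}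

theorem comp_coeff_cartierMul (hG : G.coeff.support ⊆ B) :
    (σ ∘ fun v : B => (cartierMul σ d H G).coeff v) =
      cartierMatrix d H B *ᵥ fun u : B => G.coeff u := by
  ext v
  calc σ ((cartierMul σ d H G).coeff v)
      = (H ^ (d - 1) * G).coeff ((d : ℤ) • (v : Fin n → ℤ)) := σ.apply_symm_apply _
    _ = ∑ u ∈ B, (H ^ (d - 1)).coeff ((d : ℤ) • (v : Fin n → ℤ) - u) * G.coeff u := by
      simp only [AddMonoidAlgebra.coeff_mul_apply_right, ← sub_eq_add_neg]
      exact Finsupp.sum_of_support_subset _ hG _ fun _ _ => mul_zero _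
    _ = (cartierMatrix d H B *ᵥ fun u : B => G.coeff u) v := (Finset.sum_coe_sort B _).symm

theorem iterate_comp_coeff_iterate_cartierMul (hK : Convex ℝ K) (hH : newton H ⊆ K)
    (hB : ∀ u, emb n u ∈ K → u ∈ B) (hG : newton G ⊆ K) (k : ℕ) :
    (σ^[k] ∘ fun v : B => ((cartierMul σ d H)^[k] G).coeff v) =
      twistedPow σ (cartierMatrix d H B) k *ᵥ fun u : B => G.coeff u := by
  refine iterate_comp_eq_twistedPow_mulVec (σ : R →+* R) (cartierMatrix d H B)
    (fun k (v : B) => ((cartierMul σ d H)^[k] G).coeff v) (fun k => ?_) k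
  have hsupp : ((cartierMul σ d H)^[k] G).coeff.support ⊆ B := fun u hu =>
    hB u (newton_iterate_cartierMul_subset σ d hK hH hG k
      (emb_mem_newton (Finsupp.mem_support_iff.1 hu)))
  simp only [Function.iterate_succ_apply']
  exact comp_coeff_cartierMul σ d hsupp

theorem matrix_of_A_general (hK : Convex ℝ K) (hH : newton H ⊆ K)
    (hB : ∀ u, u ∈ B ↔ emb n u ∈ K) (k : ℕ) :
    (∀ u ∈ B, ∀ v ∉ B, ((cartierMul σ d H)^[k] (AddMonoidAlgebra.single u 1)).coeff v = 0) ∧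
    ∀ u v : B, σ^[k] (((cartierMul σ d H)^[k] (AddMonoidAlgebra.single u.1 1)).coeff v) =
      twistedPow σ (cartierMatrix d H B) k v u := by
  have hmono {u} (hu : u ∈ B) : newton (AddMonoidAlgebra.single u (1 : R)) ⊆ K :=
    (newton_single_subset u 1).trans (Set.singleton_subset_iff.2 ((hB u).1 hu))
  refine ⟨fun u hu v hv => ?_, fun u v => ?_⟩
  · contrapose! hv
    exact (hB v).2 (newton_iterate_cartierMul_subset σ d hK hH (hmono hu) k (emb_mem_newton hv))
  · have hcoeff : (fun w : B => (AddMonoidAlgebra.single u.1 (1 : R)).coeff w) =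
        Pi.single u 1 := by
      ext w
      simp only [AddMonoidAlgebra.coeff_single, Finsupp.single_apply, Pi.single_apply,
        Subtype.ext_iff, eq_comm]
    have hcol := iterate_comp_coeff_iterate_cartierMul σ d hK hH (fun u => (hB u).2) (hmono u.2) k
    rw [hcoeff, Matrix.mulVec_single_one] at hcol
    exact congrFun hcol v

end Cartier

theorem iterate_frobenius_eq_self {p : ℕ} [Fact p.Prime] {k : Type*} [Field k] [Finite k]
    [CharP k p] {a : ℕ} (hk : Nat.card k = p ^ a) (x : WittVector p k) :
    WittVector.frobenius^[a] x = x := by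
  have := Fintype.ofFinite k
  ext i
  rw [WittVector.iterate_frobenius_coeff, ← hk, Nat.card_eq_fintype_card, FiniteField.pow_card]

theorem iterate_φW (ha : a ≠ 0) (x : Zq p a) : (φW p a)^[a] x = x :=
  iterate_frobenius_eq_self (GaloisField.card p a ha) x

theorem A_eq_cartierMul (H : LP p a n) : A p a n H = cartierMul (φW p a) p H := rfl

theorem Ms_eq_cartierMatrix (F : LP p a n) (s : ℕ) (B : Finset (Fin n → ℤ)) :
    Ms p a n F s B = cartierMatrix p (F ^ s) B := by
  ext v u : 2
  rw [Ms, cartierMatrix, pow_mul']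

theorem Φmat_eq_twistedPow (B : Finset (Fin n → ℤ)) (M : Matrix B B (Zq p a)) :
    Φmat p a n B M = twistedPow (φW p a) M a := rfl

/-- Let `K` be a convex polytope with integral vertices, `F ∈ ℤ_q[x^±]` with `Δ(F) ⊆ K`,
`s ≥ 1`, and `B = (sK) ∩ ℤⁿ`.  Then for each `u ∈ B`: (i) `[A_{F^s}^a(x^u)]_v = 0` for all
`v ∈ ℤⁿ ∖ B`, and (ii) for `v ∈ B`, `[A_{F^s}^a(x^u)]_v` is the `(v,u)` entry of
`φ^{a−1}(M_s) ⋯ φ(M_s) · M_s`; i.e. this matrix is the matrix of `A_{F^s}^a` on `P_{sK}`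
with respect to the monomial basis. -/
theorem matrix_of_A (ha : 1 ≤ a) (hn : 1 ≤ n) (S : Finset (Fin n → ℤ)) (F : LP p a n)
    (hF : newton F ⊆ convexHull ℝ (emb n '' (S : Set (Fin n → ℤ)))) (s : ℕ) (hs : 1 ≤ s)
    (B : Finset (Fin n → ℤ))
    (hB : ∀ u : Fin n → ℤ,
      u ∈ B ↔ emb n u ∈ (s : ℝ) • convexHull ℝ (emb n '' (S : Set (Fin n → ℤ)))) :
    (∀ u ∈ B, ∀ v : Fin n → ℤ, v ∉ B →
        ((A p a n (F ^ s))^[a] (AddMonoidAlgebra.single u 1)).coeff v = 0) ∧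
    (∀ (u v : Fin n → ℤ) (hu : u ∈ B) (hv : v ∈ B),
        ((A p a n (F ^ s))^[a] (AddMonoidAlgebra.single u 1)).coeff v =
          Φmat p a n B (Ms p a n F s B) ⟨v, hv⟩ ⟨u, hu⟩) := by
  have hK := convex_convexHull ℝ (emb n '' (S : Set (Fin n → ℤ)))
  obtain ⟨hzero, hcoeff⟩ := matrix_of_A_general (φW p a) p (hK.smul (s : ℝ))
    (newton_pow_subset hK hF hs) hB a
  refine ⟨hzero, fun u v hu hv => ?_⟩
  rw [A_eq_cartierMul, Φmat_eq_twistedPow, Ms_eq_cartierMatrix, ← hcoeff,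
    iterate_φW p a (Nat.one_le_iff_ne_zero.1 ha)]
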